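/- Let r ≥ 1 be an integer and λ_1,…,λ_r, α_1,…,α_r ∈ [0,1), and set μ_i := λ_1+⋯+λ_i. If μ_i ∉ ℤ for all 1 ≤ i ≤ r, then there exists a function F : ℂ^r → ℂ that is analytic on all of ℂ^r and satisfies F(s_1,…,s_r) = L_r(λ_1,…,λ_r; α_1,…,α_r; s_1,…,s_r) for every (s_1,…,s_r) ∈ U_r. -/

import Mathlib

/-!
The multiple Lerch series is summed one variable at a time, from the largest `n_1` to the smallest
`n_r`. Suppose the nested sum over `n_1 > ⋯ > n_i > n` has the form `e(μ_i n) b(s, n)`. Then the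
next nested sum is a tail sum of `e(μ_{i+1} m) (m + α_{i+1})^{-s_{i+1}} b(s, m)` over `m > n`, where
`e(μ_{i+1}) ≠ 1` because `μ_{i+1} ∉ ℤ`.

The coefficients `b` are kept in the class `IsSym` of symbols: families of sequences, entire in `s`,
whose `k`-th forward differences are `O((n + 1) ^ (C - k))`, uniformly on each ball of parameters,
with `C` depending on the ball. This class contains the powers (`isSym_rpowC`) and is closed under
products and shifts. It is also closed under tail sums twisted by `w ≠ 1` of modulus one
(`IsSym.exists_tail`): a summation by parts replaces the sequence by its difference, whose order is
smaller by one, so finitely many of them make the sum converge absolutely on a given ball, and the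
result does not depend on their number. On `U_r` all nested sums converge absolutely
(`nest_bound`), so there the symbols give the actual nested sums (`exists_sym`), and after `r` steps
the value at `n = 0` is the required continuation.

Holomorphy is tracked through continuity and separate holomorphy (`SepHolo`), which are easy to
check for infinite series; joint analyticity then follows from Osgood's lemma
(`SepHolo.analyticOnNhd`).
-/

open Complex

/-- `e(a) = e^{2πia}`. -/
noncomputable def eR (a : ℝ) : ℂ := Complex.exp (2 * Real.pi * Complex.I * a)

/-- For a real `b > 0` and `z ∈ ℂ`, `b^z := exp (z log b)` (real logarithm). -/
noncomputable def rpowC (b : ℝ) (z : ℂ) : ℂ := Complex.exp (z * Real.log b)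

/-- Strictly decreasing tuples of positive integers `n_1 > n_2 > ⋯ > n_r > 0`. -/
def DTuple (r : ℕ) : Type := {n : Fin r → ℕ // StrictAnti n ∧ ∀ i, 0 < n i}

/-- The term `e(λ_1 n_1)⋯e(λ_r n_r) / ((n_1+α_1)^{s_1}⋯(n_r+α_r)^{s_r})`. -/
noncomputable def lerchTerm {r : ℕ} (lam al : Fin r → ℝ) (s : Fin r → ℂ)
    (n : Fin r → ℕ) : ℂ :=
  (∏ i, eR (lam i * n i)) / ∏ i, rpowC ((n i : ℝ) + al i) (s i)

/-- The multiple Lerch zeta function (as a sum over strictly decreasing tuples). -/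
noncomputable def multipleLerch {r : ℕ} (lam al : Fin r → ℝ) (s : Fin r → ℂ) : ℂ :=
  ∑' n : DTuple r, lerchTerm lam al s n.1

/-- The term `(n_1+α_1)^{-s_1}⋯(n_r+α_r)^{-s_r}`. -/
noncomputable def hzTerm {r : ℕ} (al : Fin r → ℝ) (s : Fin r → ℂ) (n : Fin r → ℕ) : ℂ :=
  ∏ i, rpowC ((n i : ℝ) + al i) (-(s i))

/-- The multiple Hurwitz zeta function (as a sum over strictly decreasing tuples). -/
noncomputable def multipleHurwitz {r : ℕ} (al : Fin r → ℝ) (s : Fin r → ℂ) : ℂ :=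
  ∑' n : DTuple r, hzTerm al s n.1

/-- `U_r(m) = {s ∈ ℂ^r : Re(s_1+⋯+s_i) > i − m for 1 ≤ i ≤ r}` (0-based indexing). -/
def Ur (r : ℕ) (m : ℤ) : Set (Fin r → ℂ) :=
  {s | ∀ i : Fin r, ((i : ℕ) + 1 - m : ℝ) < (∑ j ∈ Finset.Iic i, s j).re}

/-- `(s)_k = s(s+1)⋯(s+k)/(k+1)!` for `k ≥ 0` and `(s)_k = 1` for `k < 0`. -/
noncomputable def pochZ (s : ℂ) (k : ℤ) : ℂ :=
  if 0 ≤ k then (∏ j ∈ Finset.range (k.toNat + 1), (s + j)) / (Nat.factorial (k.toNat + 1))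
  else 1

/-- The hyperplane `H_{i,k} : s_1 + ⋯ + s_i = i − k` (0-based: `i` here is paper's `i−1`). -/
def Hplane (r : ℕ) (i : Fin r) (k : ℕ) : Set (Fin r → ℂ) :=
  {s | ∑ j ∈ Finset.Iic i, s j = ((i : ℕ) + 1 : ℂ) - k}

/-- The union of the hyperplanes `H_{i,k}` for `(i,k)` satisfying the predicate `P`. -/
def polarSet {r : ℕ} (P : Fin r → ℕ → Prop) : Set (Fin r → ℂ) :=
  {s | ∃ i k, P i k ∧ s ∈ Hplane r i k}

/-- `F` has (at most) simple poles along the hyperplanes `H_{i,k}`, `(i,k) ∈ P`: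
around every point `p`, multiplying `F` by the (finitely many) linear factors
`s_1+⋯+s_i−i+k` of the members of `P` passing through `p` yields a function
that extends analytically to a neighbourhood of `p`. -/
def SimplePolesAlong {r : ℕ} (P : Fin r → ℕ → Prop) (F : (Fin r → ℂ) → ℂ) : Prop :=
  ∀ p : Fin r → ℂ, ∀ T : Finset (Fin r × ℕ),
    (∀ i k, (i, k) ∈ T ↔ (P i k ∧ p ∈ Hplane r i k)) →
    ∃ (V : Set (Fin r → ℂ)) (G : (Fin r → ℂ) → ℂ),
      IsOpen V ∧ p ∈ V ∧ AnalyticOnNhd ℂ G V ∧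
      ∀ s ∈ V, s ∉ polarSet P →
        G s = (∏ q ∈ T, ((∑ j ∈ Finset.Iic q.1, s j) - ((q.1 : ℕ) + 1 : ℂ) + (q.2 : ℂ))) * F s

/-- `μ_{i+1} = λ_1 + ⋯ + λ_{i+1} ∈ ℤ` (0-based index `i`). -/
def isIntIdx {r : ℕ} (lam : Fin r → ℝ) (i : Fin r) : Prop :=
  ∃ z : ℤ, ∑ j ∈ Finset.Iic i, lam j = (z : ℝ)

/-- The rank `j` of the index `i` among the indices with `μ ∈ ℤ`,
i.e. the number of indices `i' ≤ i` with `μ_{i'+1} ∈ ℤ`. -/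
noncomputable def rankIdx {r : ℕ} (lam : Fin r → ℝ) (i : Fin r) : ℕ :=
  Nat.card {i' : Fin r // i' ≤ i ∧ isIntIdx lam i'}

/-! ### Osgood's lemma -/

/-- Continuous functions on `ℂ^d` that are entire in each variable separately. -/
def SepHolo {d : ℕ} (f : (Fin d → ℂ) → ℂ) : Prop :=
  Continuous f ∧ ∀ s i, Differentiable ℂ fun z : ℂ => f (Function.update s i z)

lemma torus_sub_ne {d : ℕ} {R : ℝ} {s : Fin d → ℂ} (hs : ∀ i, ‖s i‖ < R) (θ : Fin d → ℝ)
    (i : Fin d) : torusMap 0 (fun _ => R) θ i - s i ≠ 0 := by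
  intro h
  have h1 : ‖torusMap (0 : Fin d → ℂ) (fun _ => R) θ i‖ = |R| := by
    simp [torusMap, norm_exp_ofReal_mul_I]
  rw [sub_eq_zero.1 h] at h1
  have := hs i
  have := le_abs_self R
  linarith

lemma continuous_torusMap' {d : ℕ} (R : ℝ) :
    Continuous (torusMap (0 : Fin d → ℂ) (fun _ => R)) := by
  unfold torusMap; fun_prop

/-- Cauchy's integral formula on a polydisc. -/
lemma torus_cauchy (d : ℕ) (f : (Fin d → ℂ) → ℂ) (hf : SepHolo f) (R : ℝ) (s : Fin d → ℂ)
    (hs : ∀ i, ‖s i‖ < R) :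
    torusIntegral (fun x => (∏ i, (x i - s i)⁻¹) * f x) 0 (fun _ => R)
      = (2 * Real.pi * I) ^ d * f s := by
  induction d with
  | zero => simp; congr 1; exact Subsingleton.elim _ _
  | succ d ih =>
    have hti : TorusIntegrable (fun x => (∏ i, (x i - s i)⁻¹) * f x) 0 (fun _ => R) := by
      unfold TorusIntegrable
      apply ContinuousOn.integrableOn_compact isCompact_Icc
      apply Continuous.continuousOn
      have hc := continuous_torusMap' (d := d + 1) R
      refine (continuous_finsetProd _ fun i _ => ?_).mul (hf.1.comp hc)
      exact (((continuous_apply i).comp hc).sub continuous_const).inv₀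
        fun θ => torus_sub_ne hs θ i
    rw [torusIntegral_succ hti]
    have hin : ∀ x : ℂ, torusIntegral (fun y : Fin d → ℂ =>
        (∏ i, ((Fin.cons x y : Fin (d + 1) → ℂ) i - s i)⁻¹) * f (Fin.cons x y)) 0 (fun _ => R)
        = (x - s 0)⁻¹ • ((2 * Real.pi * I) ^ d * f (Fin.cons x (fun i => s i.succ))) := by
      intro x
      have hx : SepHolo fun y : Fin d → ℂ => f (Fin.cons x y) := by
        refine ⟨hf.1.comp (by fun_prop), fun t i => ?_⟩
        simpa [Fin.cons_update] using hf.2 (Fin.cons x t) i.succ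
      rw [← ih _ hx (fun i => s i.succ) fun i => hs i.succ, smul_eq_mul,
        ← torusIntegral_const_mul]
      simp only [Fin.prod_univ_succ, Fin.cons_zero, Fin.cons_succ, mul_assoc]
    have h0 : ((0 : Fin (d + 1) → ℂ) ∘ Fin.succ) = 0 := rfl
    have h1 : ((fun _ => R : Fin (d + 1) → ℝ) ∘ Fin.succ) = fun _ => R := rfl
    simp only [h0, h1, hin, Pi.zero_apply]
    have hd : Differentiable ℂ fun x : ℂ =>
        (2 * Real.pi * I) ^ d * f (Fin.cons x (fun i => s i.succ)) := by
      have := hf.2 s 0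
      have h2 : ∀ z, Function.update s 0 z = (Fin.cons z (fun i => s i.succ) : Fin (d+1) → ℂ) := by
        intro z
        rw [← Fin.update_cons_zero (s 0)]
        congr 1
        exact (Fin.cons_self_tail s).symm
      simp only [h2] at this
      exact this.const_mul _
    rw [hd.diffContOnCl.circleIntegral_sub_inv_smul (by simpa using hs 0)]
    have h3 : (Fin.cons (s 0) (fun i => s i.succ) : Fin (d+1) → ℂ) = s := Fin.cons_self_tail s
    rw [h3, smul_eq_mul]; ring

open MeasureTheory in
/-- Osgood's lemma for functions on `ℂ^d`. By Cauchy's formula, near `c` the function is a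
continuous linear functional applied to the Cauchy kernel, and the kernel depends analytically on
`s` as an element of the Banach algebra `C(X, ℂ)`, where `X` is the parameter cube of the torus. -/
theorem SepHolo.analyticOnNhd {d : ℕ} {f : (Fin d → ℂ) → ℂ} (hf : SepHolo f) :
    AnalyticOnNhd ℂ f Set.univ := by
  intro c _
  obtain ⟨R, hR⟩ : ∃ R : ℝ, ‖c‖ < R := exists_gt _
  let X := Set.Icc (0 : Fin d → ℝ) (fun _ => 2 * Real.pi)
  have : CompactSpace X := isCompact_iff_compactSpace.1 isCompact_Icc
  let Z : Fin d → C(X, ℂ) := fun i =>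
    ⟨fun θ => torusMap 0 (fun _ => R) θ.1 i, ((continuous_apply i).comp
      (continuous_torusMap' R)).comp continuous_subtype_val⟩
  -- The density that integration over the torus puts against the kernel `∏ i, (x i - s i)⁻¹`.
  let k : X → ℂ := fun θ => (∏ i : Fin d, R * exp (θ.1 i * I) * I : ℂ) *
    f (torusMap 0 (fun _ => R) θ.1)
  have hk : Continuous k := by
    refine Continuous.mul (continuous_finsetProd _ fun i _ => ?_)
      (hf.1.comp ((continuous_torusMap' R).comp
      continuous_subtype_val))
    have hci : Continuous fun θ : X => θ.1 i :=
      (continuous_apply i).comp continuous_subtype_val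
    exact (continuous_const.mul (continuous_exp.comp
      ((continuous_ofReal.comp hci).mul continuous_const))).mul continuous_const
  let μ : Measure X := volume.comap Subtype.val
  have hμ : IsFiniteMeasure μ := by
    refine ⟨?_⟩
    simp only [μ]
    rw [comap_subtype_coe_apply measurableSet_Icc, Set.image_univ, Subtype.range_coe]
    exact isCompact_Icc.measure_lt_top
  have hi : ∀ g : C(X, ℂ), Integrable (fun θ => k θ * g θ) μ := fun g =>
    (hk.mul g.continuous).integrable_of_hasCompactSupport (HasCompactSupport.of_compactSpace _)
  let Φ₀ : C(X, ℂ) →ₗ[ℂ] ℂ :=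
    { toFun := fun g => ∫ θ, k θ * g θ ∂μ
      map_add' := fun g h => by
        rw [← integral_add (hi g) (hi h)]; simp [mul_add]
      map_smul' := fun a g => by
        simp only [RingHom.id_apply, smul_eq_mul]
        rw [← integral_const_mul]
        congr 1; ext θ; simp; ring }
  let Φ : C(X, ℂ) →L[ℂ] ℂ := Φ₀.mkContinuous (∫ θ, ‖k θ‖ ∂μ) fun g => by
    change ‖∫ θ, k θ * g θ ∂μ‖ ≤ _
    rw [← integral_mul_const]
    refine norm_integral_le_of_norm_le ?_ (Filter.Eventually.of_forall fun θ => ?_)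
    · have := (hi 1).norm.mul_const ‖g‖
      simpa using this
    · rw [norm_mul]
      gcongr
      exact g.norm_coe_le_norm θ
  -- The Cauchy kernel; the inverses exist in `C(X, ℂ)` as soon as `‖s‖ < R`.
  let G : (Fin d → ℂ) → C(X, ℂ) := fun s => ∏ i, Ring.inverse (Z i - algebraMap ℂ C(X, ℂ) (s i))
  have hu : ∀ s : Fin d → ℂ, ‖s‖ < R → ∀ i, IsUnit (Z i - algebraMap ℂ C(X, ℂ) (s i)) := by
    intro s hs i
    rw [ContinuousMap.isUnit_iff_forall_ne_zero]
    intro θ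
    exact torus_sub_ne (fun j => (norm_le_pi_norm s j).trans_lt hs) θ.1 i
  have hG : AnalyticAt ℂ G c := by
    refine Finset.analyticAt_fun_prod _ fun i _ => ?_
    obtain ⟨u, hu'⟩ := hu c hR i
    have h1 : AnalyticAt ℂ (fun s : Fin d → ℂ => Z i - algebraMap ℂ C(X, ℂ) (s i)) c := by
      have : (fun s : Fin d → ℂ => Z i - algebraMap ℂ C(X, ℂ) (s i)) =
          fun s => Z i - ((ContinuousLinearMap.proj (R := ℂ) (φ := fun _ : Fin d => ℂ) i).smulRight
            (1 : C(X, ℂ))) s := by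
        ext s; simp
      rw [this]
      exact analyticAt_const.sub (ContinuousLinearMap.analyticAt _ _)
    have h2 := analyticAt_inverse (𝕜 := ℂ) u
    rw [hu'] at h2
    exact AnalyticAt.comp (f := fun s : Fin d → ℂ => Z i - algebraMap ℂ C(X, ℂ) (s i)) h2 h1
  have hΦ : AnalyticAt ℂ (fun s => ((2 * Real.pi * I) ^ d)⁻¹ * Φ (G s)) c :=
    analyticAt_const.mul ((ContinuousLinearMap.analyticAt Φ _).comp hG)
  refine hΦ.congr ?_
  filter_upwards [(isOpen_lt continuous_norm continuous_const).mem_nhds hR] with s hs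
  have hc := torus_cauchy d f hf R s fun j => (norm_le_pi_norm s j).trans_lt hs
  have hval : Φ (G s) = torusIntegral (fun x => (∏ i, (x i - s i)⁻¹) * f x) 0 (fun _ => R) := by
    change ∫ θ, k θ * (G s) θ ∂μ = _
    unfold torusIntegral
    rw [← integral_subtype_comap measurableSet_Icc]
    congr 1
    ext θ
    have : (G s) θ = ∏ i, (torusMap 0 (fun _ => R) θ.1 i - s i)⁻¹ := by
      simp only [G, ContinuousMap.coe_prod, Finset.prod_apply]
      refine Finset.prod_congr rfl fun i _ => ?_
      have h1 := Ring.inverse_mul_cancel _ (hu s hs i)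
      have h2 := congrArg (fun g : C(X, ℂ) => g θ) h1
      simp only [ContinuousMap.mul_apply, ContinuousMap.one_apply] at h2
      exact eq_inv_of_mul_eq_one_left h2
    rw [this]
    simp only [k, smul_eq_mul]
    ring
  rw [hval, hc, inv_mul_cancel_left₀]
  simp [Real.pi_ne_zero]

/-! ### Tails of power sums -/

lemma rpow_le_two_rpow_mul {x y : ℝ} (e : ℝ) (hx : 0 < x) (hxy : x ≤ y) (hy : y ≤ 2 * x) :
    y ^ e ≤ 2 ^ |e| * x ^ e := by
  rcases le_or_gt 0 e with he | he
  · rw [abs_of_nonneg he, ← Real.mul_rpow zero_le_two hx.le]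
    exact Real.rpow_le_rpow (hx.le.trans hxy) hy he
  · have h1 : y ^ e ≤ x ^ e := Real.rpow_le_rpow_of_nonpos hx hxy he.le
    have h2 : (1 : ℝ) ≤ 2 ^ |e| := Real.one_le_rpow one_le_two (abs_nonneg e)
    have h3 : 0 ≤ x ^ e := Real.rpow_nonneg hx.le e
    nlinarith

/-- One step of the telescoping comparison of `x ^ (-τ)` with its primitive. -/
lemma rpow_neg_le_sub {τ x : ℝ} (hτ : 1 < τ) (hx : 1 ≤ x) :
    x ^ (-τ) ≤ 2 ^ τ * (x ^ (1 - τ) / (τ - 1) - (x + 1) ^ (1 - τ) / (τ - 1)) := by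
  have hd : ∀ y ∈ Set.Icc x (x + 1),
      HasDerivAt (fun y : ℝ => y ^ (1 - τ) / (τ - 1)) (-y ^ (-τ)) y := by
    intro y hy
    have hy0 : y ≠ 0 := by have := hy.1; intro h; linarith
    have h := (Real.hasDerivAt_rpow_const (x := y) (p := 1 - τ) (Or.inl hy0)).div_const (τ - 1)
    have hτ' : τ - 1 ≠ 0 := by linarith
    have he : -y ^ (-τ) = (1 - τ) * y ^ (1 - τ - 1) / (τ - 1) := by
      rw [show 1 - τ - 1 = -τ by ring]
      field_simp
      ring
    rw [he]
    exact h
  obtain ⟨ξ, hξ, h⟩ := exists_hasDerivAt_eq_slope (fun y : ℝ => y ^ (1 - τ) / (τ - 1))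
    (fun y => -y ^ (-τ)) (lt_add_one x)
    (fun y hy => (hd y hy).continuousAt.continuousWithinAt)
    (fun y hy => hd y ⟨hy.1.le, hy.2.le⟩)
  have h1 : (2 * x) ^ (-τ) ≤ ξ ^ (-τ) :=
    Real.rpow_le_rpow_of_nonpos (by linarith [hξ.1]) (by linarith [hξ.2]) (by linarith)
  rw [Real.mul_rpow zero_le_two (by linarith), Real.rpow_neg zero_le_two] at h1
  have h2 : (0 : ℝ) < 2 ^ τ := Real.rpow_pos_of_pos two_pos τ
  rw [inv_mul_le_iff₀ h2] at h1
  have h3 : x ^ (1 - τ) / (τ - 1) - (x + 1) ^ (1 - τ) / (τ - 1) = ξ ^ (-τ) := by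
    simp only [add_sub_cancel_left, div_one] at h
    linarith
  rw [h3]; exact h1

lemma tail_rpow {τ : ℝ} (hτ : 1 < τ) : ∃ C : ℝ, 0 ≤ C ∧ ∀ n : ℕ,
    Summable (fun k : ℕ => ((n : ℝ) + k + 1) ^ (-τ)) ∧
    ∑' k : ℕ, ((n : ℝ) + k + 1) ^ (-τ) ≤ C * ((n : ℝ) + 1) ^ (1 - τ) := by
  refine ⟨2 ^ τ / (τ - 1), div_nonneg (by positivity) (by linarith), fun n => ?_⟩
  have hnn : ∀ k : ℕ, 0 ≤ ((n : ℝ) + k + 1) ^ (-τ) := fun k => by positivity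
  have hb : ∀ N : ℕ, ∑ k ∈ Finset.range N, ((n : ℝ) + k + 1) ^ (-τ) ≤
      2 ^ τ / (τ - 1) * ((n : ℝ) + 1) ^ (1 - τ) := by
    intro N
    have h1 : ∑ k ∈ Finset.range N, ((n : ℝ) + k + 1) ^ (-τ) ≤
        ∑ k ∈ Finset.range N, 2 ^ τ * (((n : ℝ) + k + 1) ^ (1 - τ) / (τ - 1) -
          ((n : ℝ) + (k + 1 : ℕ) + 1) ^ (1 - τ) / (τ - 1)) := by
      refine Finset.sum_le_sum fun k _ => ?_
      have hk : (1 : ℝ) ≤ n + k + 1 := by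
        have : (0 : ℝ) ≤ n + k := by positivity
        linarith
      have := rpow_neg_le_sub hτ hk
      push_cast
      rwa [show (n : ℝ) + (k + 1) + 1 = n + k + 1 + 1 by ring]
    rw [← Finset.mul_sum, Finset.sum_range_sub'
      (fun k : ℕ => ((n : ℝ) + k + 1) ^ (1 - τ) / (τ - 1))] at h1
    refine h1.trans ?_
    have h2 : 0 ≤ ((n : ℝ) + N + 1) ^ (1 - τ) / (τ - 1) :=
      div_nonneg (by positivity) (by linarith)
    have h3 : (0 : ℝ) < 2 ^ τ := by positivity
    rw [div_mul_eq_mul_div, mul_div_assoc]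
    apply mul_le_mul_of_nonneg_left _ h3.le
    simpa using h2
  exact ⟨summable_of_sum_range_le hnn hb, Real.tsum_le_of_sum_range_le hnn hb⟩

/-! ### Symbols -/

/-- `SymOn K C a`: uniformly for `s ∈ K`, the sequence `a s` behaves like a classical symbol of
order `C`, i.e. its `k`-th forward difference is `O((n + 1) ^ (C - k))` for every `k`. -/
def SymOn {E : Type*} (K : Set E) (C : ℝ) (a : E → ℕ → ℂ) : Prop :=
  ∀ k : ℕ, ∃ M : ℝ, ∀ s ∈ K, ∀ n : ℕ, ‖(fwdDiff 1)^[k] (a s) n‖ ≤ M * ((n : ℝ) + 1) ^ (C - k)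

section SymOn

variable {E : Type*} {K : Set E} {C D : ℝ} {a b : E → ℕ → ℂ}

lemma one_le_cast_add_one (n : ℕ) : (1 : ℝ) ≤ (n : ℝ) + 1 := by
  have : (0 : ℝ) ≤ n := n.cast_nonneg
  linarith

lemma SymOn.exists_nonneg (ha : SymOn K C a) (k : ℕ) : ∃ M : ℝ, 0 ≤ M ∧ ∀ s ∈ K, ∀ n : ℕ,
    ‖(fwdDiff 1)^[k] (a s) n‖ ≤ M * ((n : ℝ) + 1) ^ (C - k) := by
  obtain ⟨M, hM⟩ := ha k
  refine ⟨|M|, abs_nonneg M, fun s hs n => (hM s hs n).trans ?_⟩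
  gcongr
  exact le_abs_self M

lemma SymOn.mono (ha : SymOn K C a) (h : C ≤ D) : SymOn K D a := by
  intro k
  obtain ⟨M, hM0, hM⟩ := ha.exists_nonneg k
  refine ⟨M, fun s hs n => (hM s hs n).trans ?_⟩
  gcongr
  exact one_le_cast_add_one n

lemma SymOn.congr (ha : SymOn K C a) (h : ∀ s ∈ K, a s = b s) : SymOn K C b := by
  intro k
  obtain ⟨M, hM⟩ := ha k
  exact ⟨M, fun s hs n => h s hs ▸ hM s hs n⟩

lemma SymOn.fwdDiff (ha : SymOn K C a) : SymOn K (C - 1) fun s => fwdDiff 1 (a s) := by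
  intro k
  obtain ⟨M, hM⟩ := ha (k + 1)
  refine ⟨M, fun s hs n => ?_⟩
  have := hM s hs n
  rw [Function.iterate_succ_apply] at this
  convert this using 3
  push_cast; ring

lemma SymOn.fwdDiff_iter (ha : SymOn K C a) (N : ℕ) :
    SymOn K (C - N) fun s => (_root_.fwdDiff 1)^[N] (a s) := by
  induction N with
  | zero => simpa using ha
  | succ N ih =>
    have := ih.fwdDiff
    simp only [← Function.iterate_succ_apply' (_root_.fwdDiff (1 : ℕ))] at this
    convert this using 1
    push_cast; ring

lemma SymOn.shift (ha : SymOn K C a) : SymOn K C fun s n => a s (n + 1) := by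
  intro k
  obtain ⟨M, hM0, hM⟩ := ha.exists_nonneg k
  refine ⟨M * 2 ^ |C - k|, fun s hs n => ?_⟩
  have h1 : (_root_.fwdDiff 1)^[k] (fun n => a s (n + 1)) n =
      (_root_.fwdDiff 1)^[k] (a s) (n + 1) := fwdDiff_iter_comp_add 1 (a s) 1 k n
  rw [h1, mul_assoc]
  refine (hM s hs (n + 1)).trans ?_
  gcongr
  have := one_le_cast_add_one n
  apply rpow_le_two_rpow_mul <;> push_cast <;> linarith

lemma SymOn.add (ha : SymOn K C a) (hb : SymOn K C b) :
    SymOn K C fun s n => a s n + b s n := by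
  intro k
  obtain ⟨M, hM⟩ := ha k
  obtain ⟨M', hM'⟩ := hb k
  refine ⟨M + M', fun s hs n => ?_⟩
  have h1 : (_root_.fwdDiff 1)^[k] (fun n => a s n + b s n) =
    (_root_.fwdDiff 1)^[k] (a s) + (_root_.fwdDiff 1)^[k] (b s) := fwdDiff_iter_add 1 (a s) (b s) k
  rw [h1, add_mul]
  exact (norm_add_le _ _).trans (add_le_add (hM s hs n) (hM' s hs n))

lemma SymOn.const_mul (ha : SymOn K C a) (c : ℂ) : SymOn K C fun s n => c * a s n := by
  intro k
  obtain ⟨M, hM⟩ := ha k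
  refine ⟨‖c‖ * M, fun s hs n => ?_⟩
  have h1 : (_root_.fwdDiff 1)^[k] (fun n => c * a s n) =
    c • (_root_.fwdDiff 1)^[k] (a s) := fwdDiff_iter_const_smul 1 c (a s) k
  rw [h1, mul_assoc]
  simp only [Pi.smul_apply, smul_eq_mul, norm_mul]
  gcongr
  exact hM s hs n

/-- The discrete Leibniz rule makes symbols multiplicative. -/
lemma SymOn.mul (ha : SymOn K C a) (hb : SymOn K D b) :
    SymOn K (C + D) fun s n => a s n * b s n := by
  intro k
  induction k generalizing C D a b with
  | zero =>
    obtain ⟨M, hM0, hM⟩ := ha.exists_nonneg 0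
    obtain ⟨M', hM0', hM'⟩ := hb.exists_nonneg 0
    refine ⟨M * M', fun s hs n => ?_⟩
    have h1 := hM s hs n
    have h2 := hM' s hs n
    simp only [Function.iterate_zero, id_eq, Nat.cast_zero, sub_zero, norm_mul] at *
    rw [Real.rpow_add (by positivity)]
    calc _ ≤ (M * ((n : ℝ) + 1) ^ C) * (M' * ((n : ℝ) + 1) ^ D) := by gcongr
      _ = _ := by ring
  | succ k ih =>
    obtain ⟨M, hM⟩ := ih ha.fwdDiff hb.shift
    obtain ⟨M', hM'⟩ := ih ha hb.fwdDiff
    refine ⟨M + M', fun s hs n => ?_⟩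
    have h1 : _root_.fwdDiff 1 (fun n => a s n * b s n) =
        (fun n => _root_.fwdDiff 1 (a s) n * b s (n + 1)) +
          fun n => a s n * _root_.fwdDiff 1 (b s) n := by
      ext n; simp only [_root_.fwdDiff, Pi.add_apply]; ring
    rw [Function.iterate_succ_apply, h1, fwdDiff_iter_add, add_mul]
    refine (norm_add_le _ _).trans (add_le_add ?_ ?_)
    · have := hM s hs n
      rwa [show C - 1 + D - k = C + D - (k + 1 : ℕ) by push_cast; ring] at this
    · have := hM' s hs n
      rwa [show C + (D - 1) - k = C + D - (k + 1 : ℕ) by push_cast; ring] at this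

lemma SymOn.summable (ha : SymOn K C a) (hC : C < -1) {s : E} (hs : s ∈ K) : Summable (a s) := by
  obtain ⟨M, hM⟩ := ha 0
  obtain ⟨B, -, hB⟩ := tail_rpow (τ := -C) (by linarith)
  refine Summable.of_norm_bounded (((hB 0).1).mul_left M) fun n => ?_
  simpa using hM s hs n

end SymOn

/-! ### Twisted tail sums and summation by parts -/

/-- The twisted tail sum `∑_{k ≥ 0} w ^ k u (n + k)`. -/
noncomputable def tailSum (w : ℂ) (u : ℕ → ℂ) (n : ℕ) : ℂ := ∑' k : ℕ, w ^ k * u (n + k)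

lemma summable_tail {w : ℂ} (hw : ‖w‖ = 1) {u : ℕ → ℂ} (hu : Summable u) (n : ℕ) :
    Summable fun k : ℕ => w ^ k * u (n + k) := by
  refine Summable.of_norm ?_
  simp only [norm_mul, norm_pow, hw, one_pow, one_mul]
  have := ((summable_nat_add_iff n).2 hu).norm
  simpa only [add_comm n] using this

lemma summable_fwdDiff {u : ℕ → ℂ} (hu : Summable u) : Summable (fwdDiff 1 u) :=
  ((summable_nat_add_iff 1).2 hu).sub hu

lemma fwdDiff_tailSum {w : ℂ} (hw : ‖w‖ = 1) {u : ℕ → ℂ} (hu : Summable u) :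
    fwdDiff 1 (tailSum w u) = tailSum w (fwdDiff 1 u) := by
  ext n
  simp only [fwdDiff, tailSum]
  rw [← (summable_tail hw hu (n + 1)).tsum_sub (summable_tail hw hu n)]
  refine tsum_congr fun k => ?_
  rw [mul_sub, add_right_comm]

lemma fwdDiff_iter_tailSum {w : ℂ} (hw : ‖w‖ = 1) {u : ℕ → ℂ} (hu : Summable u) (k : ℕ) :
    (fwdDiff 1)^[k] (tailSum w u) = tailSum w ((fwdDiff 1)^[k] u) := by
  induction k generalizing u with
  | zero => rfl
  | succ k ih =>
    rw [Function.iterate_succ_apply, Function.iterate_succ_apply, fwdDiff_tailSum hw hu,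
      ih (summable_fwdDiff hu)]

/-- Summation by parts. -/
lemma tailSum_eq {w : ℂ} (hw : ‖w‖ = 1) (hw1 : w ≠ 1) {u : ℕ → ℂ} (hu : Summable u) (n : ℕ) :
    tailSum w u n = (1 - w)⁻¹ * u n + (1 - w)⁻¹ * w * tailSum w (fwdDiff 1 u) n := by
  have h1 : tailSum w u n = u n + w * tailSum w u (n + 1) := by
    unfold tailSum
    rw [(summable_tail hw hu n).tsum_eq_zero_add, ← tsum_mul_left]
    simp only [pow_zero, one_mul, add_zero, pow_succ']
    congr 1
    refine tsum_congr fun k => ?_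
    rw [mul_assoc, add_right_comm, add_assoc]
  have h2 : tailSum w (fwdDiff 1 u) n = tailSum w u (n + 1) - tailSum w u n := by
    rw [← fwdDiff_tailSum hw hu]; rfl
  have h3 : 1 - w ≠ 0 := sub_ne_zero.2 (Ne.symm hw1)
  rw [h2]
  field_simp
  linear_combination h1

/-- The tail sum after `N` summations by parts. It converges for sequences whose `N`-th
difference is summable, and there it regularizes `tailSum`. -/
noncomputable def regSum (w : ℂ) : ℕ → (ℕ → ℂ) → ℕ → ℂ
  | 0, u => tailSum w u
  | N + 1, u => fun n => (1 - w)⁻¹ * u n + (1 - w)⁻¹ * w * regSum w N (fwdDiff 1 u) n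

lemma regSum_eq_tailSum {w : ℂ} (hw : ‖w‖ = 1) (hw1 : w ≠ 1) {u : ℕ → ℂ} (hu : Summable u)
    (N : ℕ) : regSum w N u = tailSum w u := by
  induction N generalizing u with
  | zero => rfl
  | succ N ih =>
    ext n
    rw [tailSum_eq hw hw1 hu, ← ih (summable_fwdDiff hu)]; rfl

lemma regSum_add {w : ℂ} (hw : ‖w‖ = 1) (hw1 : w ≠ 1) {u : ℕ → ℂ} (N j : ℕ)
    (hu : Summable ((fwdDiff 1)^[N] u)) : regSum w (N + j) u = regSum w N u := by
  induction N generalizing u with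
  | zero => rw [zero_add]; exact regSum_eq_tailSum hw hw1 hu j
  | succ N ih =>
    rw [Function.iterate_succ_apply] at hu
    rw [add_right_comm]
    ext n
    simp only [regSum, ih hu]

lemma SymOn.tailSum {E : Type*} {K : Set E} {C : ℝ} {a : E → ℕ → ℂ} (ha : SymOn K C a)
    {w : ℂ} (hw : ‖w‖ = 1) (hC : C < -1) : SymOn K (C + 1) fun s => tailSum w (a s) := by
  intro k
  obtain ⟨M, hM0, hM⟩ := ha.exists_nonneg k
  have hk : (0 : ℝ) ≤ k := k.cast_nonneg
  obtain ⟨B, hB0, hB⟩ := tail_rpow (τ := k - C) (by linarith)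
  refine ⟨M * B, fun s hs n => ?_⟩
  dsimp only
  rw [fwdDiff_iter_tailSum hw (ha.summable hC hs)]
  have h1 := ((hB n).1).mul_left M
  have h2 : ∀ j : ℕ, ‖w ^ j * (_root_.fwdDiff 1)^[k] (a s) (n + j)‖ ≤
      M * ((n : ℝ) + j + 1) ^ (-((k : ℝ) - C)) := by
    intro j
    have := hM s hs (n + j)
    simpa [norm_mul, hw] using this
  refine (tsum_of_norm_bounded h1.hasSum h2).trans ?_
  rw [tsum_mul_left, mul_assoc]
  refine mul_le_mul_of_nonneg_left ?_ hM0
  have := (hB n).2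
  rwa [show 1 - ((k : ℝ) - C) = C + 1 - k by ring] at this

/-! ### Holomorphy of regularized tail sums -/

/-- Separate holomorphy, localized to the ball of radius `R` around the origin. -/
def HoloOn {d : ℕ} (R : ℝ) (f : (Fin d → ℂ) → ℂ) : Prop :=
  ContinuousOn f (Metric.ball 0 R) ∧ ∀ s i, DifferentiableOn ℂ
    (fun z : ℂ => f (Function.update s i z)) {z | Function.update s i z ∈ Metric.ball 0 R}

section HoloOn

variable {d : ℕ} {R : ℝ} {f g : (Fin d → ℂ) → ℂ}

lemma isOpen_slice (R : ℝ) (s : Fin d → ℂ) (i : Fin d) :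
    IsOpen {z : ℂ | Function.update s i z ∈ Metric.ball (0 : Fin d → ℂ) R} :=
  Metric.isOpen_ball.preimage (by fun_prop)

lemma HoloOn.congr (hf : HoloOn R f) (h : ∀ s ∈ Metric.ball 0 R, g s = f s) : HoloOn R g :=
  ⟨hf.1.congr h, fun s i => (hf.2 s i).congr fun _ hz => h _ hz⟩

lemma SepHolo.holoOn (hf : SepHolo f) (R : ℝ) : HoloOn R f :=
  ⟨hf.1.continuousOn, fun s i => (hf.2 s i).differentiableOn⟩

lemma sepHolo_of_holoOn (h : ∀ R : ℕ, HoloOn R f) : SepHolo f := by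
  refine ⟨continuous_iff_continuousAt.2 fun s => ?_, fun s i z => ?_⟩
  · obtain ⟨R, hR⟩ := exists_nat_gt ‖s‖
    exact (h R).1.continuousAt (Metric.isOpen_ball.mem_nhds (by simpa using hR))
  · obtain ⟨R, hR⟩ := exists_nat_gt ‖Function.update s i z‖
    exact ((h R).2 s i).differentiableAt ((isOpen_slice R s i).mem_nhds (by simpa using hR))

lemma SepHolo.add (hf : SepHolo f) (hg : SepHolo g) : SepHolo fun s => f s + g s :=
  ⟨hf.1.add hg.1, fun s i => (hf.2 s i).add (hg.2 s i)⟩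

lemma SepHolo.sub (hf : SepHolo f) (hg : SepHolo g) : SepHolo fun s => f s - g s :=
  ⟨hf.1.sub hg.1, fun s i => (hf.2 s i).sub (hg.2 s i)⟩

lemma SepHolo.mul (hf : SepHolo f) (hg : SepHolo g) : SepHolo fun s => f s * g s :=
  ⟨hf.1.mul hg.1, fun s i => (hf.2 s i).mul (hg.2 s i)⟩

lemma sepHolo_const (c : ℂ) : SepHolo fun _ : Fin d → ℂ => c :=
  ⟨continuous_const, fun _ _ => differentiable_const c⟩

lemma HoloOn.add (hf : HoloOn R f) (hg : HoloOn R g) : HoloOn R fun s => f s + g s :=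
  ⟨hf.1.add hg.1, fun s i => (hf.2 s i).add (hg.2 s i)⟩

lemma HoloOn.const_mul (hf : HoloOn R f) (c : ℂ) : HoloOn R fun s => c * f s :=
  ⟨continuousOn_const.mul hf.1, fun s i => (hf.2 s i).const_mul c⟩

lemma holoOn_tsum {F : ℕ → (Fin d → ℂ) → ℂ} {u : ℕ → ℝ} (hu : Summable u)
    (hF : ∀ k, HoloOn R (F k)) (hb : ∀ k, ∀ s ∈ Metric.ball 0 R, ‖F k s‖ ≤ u k) :
    HoloOn R fun s => ∑' k, F k s :=
  ⟨continuousOn_tsum (fun k => (hF k).1) hu hb, fun s i =>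
    differentiableOn_tsum_of_summable_norm hu (fun k => (hF k).2 s i) (isOpen_slice R s i)
      fun k _ hz => hb k _ hz⟩

end HoloOn

/-- Each unfolding of `regSum` lowers the order of the summand by one, so once `C - N < -1` the
innermost tail sum converges absolutely and locally uniformly. -/
lemma SymOn.regSum {d : ℕ} {R : ℝ} {w : ℂ} (hw : ‖w‖ = 1) (N : ℕ) {C : ℝ}
    {a : (Fin d → ℂ) → ℕ → ℂ} (ha : SymOn (Metric.ball 0 R) C a)
    (hh : ∀ n, SepHolo fun s => a s n) (hN : C - N < -1) :
    SymOn (Metric.ball 0 R) (C + 1) (fun s => regSum w N (a s)) ∧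
      ∀ n, HoloOn R fun s => regSum w N (a s) n := by
  induction N generalizing C a with
  | zero =>
    have hC : C < -1 := by simpa using hN
    refine ⟨ha.tailSum hw hC, fun n => ?_⟩
    obtain ⟨M, hM⟩ := ha 0
    obtain ⟨B, -, hB⟩ := tail_rpow (τ := -C) (by linarith)
    refine holoOn_tsum (((hB n).1).mul_left M)
      (fun k => ((hh (n + k)).holoOn R).const_mul (w ^ k)) fun k s hs => ?_
    simpa [norm_mul, hw] using hM s hs (n + k)
  | succ N ih =>
    obtain ⟨h1, h2⟩ := ih ha.fwdDiff (fun n => (hh (n + 1)).sub (hh n))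
      (by push_cast at hN; linarith)
    refine ⟨?_, fun n => ?_⟩
    · exact ((ha.mono (by linarith)).const_mul _).add ((h1.mono (by linarith)).const_mul _)
    · exact (((hh n).holoOn R).const_mul _).add ((h2 n).const_mul _)

/-- A symbol on `ℂ^d`: a family of sequences whose terms are entire in the parameter and which, on
every ball, satisfies symbol estimates of some order. -/
def IsSym {d : ℕ} (a : (Fin d → ℂ) → ℕ → ℂ) : Prop :=
  (∀ n, SepHolo fun s => a s n) ∧ ∀ R : ℕ, ∃ C : ℝ, SymOn (Metric.ball 0 (R : ℝ)) C a

lemma IsSym.mul {d : ℕ} {a b : (Fin d → ℂ) → ℕ → ℂ} (ha : IsSym a) (hb : IsSym b) :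
    IsSym fun s n => a s n * b s n := by
  refine ⟨fun n => (ha.1 n).mul (hb.1 n), fun R => ?_⟩
  obtain ⟨C, hC⟩ := ha.2 R
  obtain ⟨D, hD⟩ := hb.2 R
  exact ⟨C + D, hC.mul hD⟩

lemma IsSym.shift {d : ℕ} {a : (Fin d → ℂ) → ℕ → ℂ} (ha : IsSym a) :
    IsSym fun s n => a s (n + 1) :=
  ⟨fun n => ha.1 (n + 1), fun R => (ha.2 R).imp fun _ h => h.shift⟩

lemma IsSym.const_mul {d : ℕ} {a : (Fin d → ℂ) → ℕ → ℂ} (ha : IsSym a) (c : ℂ) :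
    IsSym fun s n => c * a s n :=
  ⟨fun n => (sepHolo_const c).mul (ha.1 n), fun R => (ha.2 R).imp fun _ h => h.const_mul c⟩

/-- Twisted tail summation maps symbols to symbols: since `w ≠ 1`, summation by parts gains one
order each time, so that it extends the convergent sums to all parameters. -/
lemma IsSym.exists_tail {d : ℕ} {a : (Fin d → ℂ) → ℕ → ℂ} (ha : IsSym a) {w : ℂ} (hw : ‖w‖ = 1)
    (hw1 : w ≠ 1) : ∃ b : (Fin d → ℂ) → ℕ → ℂ, IsSym b ∧
      ∀ s, Summable (a s) → b s = tailSum w (a s) := by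
  choose C hC using ha.2
  -- `N R` summations by parts suffice on the ball of radius `R`.
  let N : ℕ → ℕ := fun R => ⌈C R⌉₊ + 2
  have hN : ∀ R, C R - N R < -1 := by
    intro R
    have := Nat.le_ceil (C R)
    simp only [N]; push_cast; linarith
  let ρ : (Fin d → ℂ) → ℕ := fun s => ⌊‖s‖⌋₊ + 1
  have hρ : ∀ s, s ∈ Metric.ball (0 : Fin d → ℂ) (ρ s : ℝ) := by
    intro s
    simpa [ρ] using Nat.lt_floor_add_one ‖s‖
  have hsum : ∀ R : ℕ, ∀ s ∈ Metric.ball (0 : Fin d → ℂ) (R : ℝ),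
      Summable ((fwdDiff 1)^[N R] (a s)) := fun R s hs =>
    ((hC R).fwdDiff_iter (N R)).summable (hN R) hs
  have heq : ∀ R : ℕ, ∀ s ∈ Metric.ball (0 : Fin d → ℂ) (R : ℝ),
      regSum w (N (ρ s)) (a s) = regSum w (N R) (a s) := by
    intro R s hs
    rw [← regSum_add hw hw1 (N (ρ s)) (N R) (hsum _ s (hρ s)),
      ← regSum_add hw hw1 (N R) (N (ρ s)) (hsum R s hs), add_comm]
  refine ⟨fun s => regSum w (N (ρ s)) (a s), ⟨fun n => sepHolo_of_holoOn fun R => ?_, fun R => ?_⟩,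
    fun s hs => regSum_eq_tailSum hw hw1 hs _⟩
  · exact ((SymOn.regSum hw (N R) (hC R) ha.1 (hN R)).2 n).congr fun s hs => congrFun (heq R s hs) n
  · exact ⟨C R + 1, (SymOn.regSum hw (N R) (hC R) ha.1 (hN R)).1.congr
      fun s hs => (heq R s hs).symm⟩

/-! ### Powers are symbols -/

lemma norm_rpowC {x : ℝ} (hx : 0 < x) (z : ℂ) : ‖rpowC x z‖ = x ^ z.re := by
  rw [rpowC, norm_exp, Real.rpow_def_of_pos hx, mul_comm]
  simp

lemma hasDerivAt_rpowC {x : ℝ} (hx : 0 < x) (z : ℂ) :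
    HasDerivAt (fun y : ℝ => rpowC y (-z)) (-z * rpowC x (-(z + 1))) x := by
  have h1 : HasDerivAt (fun y : ℝ => ((Real.log y : ℝ) : ℂ)) ((x⁻¹ : ℝ) : ℂ) x :=
    (Real.hasDerivAt_log hx.ne').ofReal_comp
  have h2 := (h1.const_mul (-z)).cexp
  have he : rpowC x (-(z + 1)) = rpowC x (-z) * ((x⁻¹ : ℝ) : ℂ) := by
    have h3 : ((x⁻¹ : ℝ) : ℂ) = exp (-(Real.log x : ℝ)) := by
      rw [← ofReal_neg, ← ofReal_exp, Real.exp_neg, Real.exp_log hx]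
    rw [h3, rpowC, rpowC, ← exp_add]
    congr 1; ring
  have h4 : -z * (rpowC x (-z) * ((x⁻¹ : ℝ) : ℂ)) =
      exp (-z * (Real.log x : ℝ)) * (-z * ((x⁻¹ : ℝ) : ℂ)) := by
    rw [rpowC]; ring
  rw [he, h4]
  exact h2

lemma hasDerivAt_fwdDiff_rpowC (k : ℕ) {x : ℝ} (hx : 0 < x) (z : ℂ) :
    HasDerivAt ((fwdDiff 1)^[k] fun y : ℝ => rpowC y (-z))
      (-z * (fwdDiff 1)^[k] (fun y : ℝ => rpowC y (-(z + 1))) x) x := by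
  induction k generalizing x with
  | zero => exact hasDerivAt_rpowC hx z
  | succ k ih =>
    rw [Function.iterate_succ_apply', Function.iterate_succ_apply']
    have h := ((ih (x := x + 1) (by linarith)).comp_add_const x 1).sub (ih hx)
    have he : -z * fwdDiff 1 ((fwdDiff 1)^[k] fun y : ℝ => rpowC y (-(z + 1))) x =
        -z * (fwdDiff 1)^[k] (fun y : ℝ => rpowC y (-(z + 1))) (x + 1) -
        -z * (fwdDiff 1)^[k] (fun y : ℝ => rpowC y (-(z + 1))) x := by
      rw [fwdDiff, mul_sub]
    rw [he]
    exact h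

/-- The `k`-th difference of `y ^ (-z)` is `O(x ^ (-Re z - k))`: the derivative of a `k`-th
difference is `-z` times the `k`-th difference at `z + 1`, and the mean value inequality bounds the
next difference. -/
lemma norm_fwdDiff_rpowC_le (k : ℕ) (R C : ℝ) : ∃ M : ℝ, 0 ≤ M ∧ ∀ z : ℂ, ‖z‖ ≤ R → -C ≤ z.re →
    ∀ x : ℝ, 1 ≤ x → ‖(fwdDiff 1)^[k] (fun y : ℝ => rpowC y (-z)) x‖ ≤ M * x ^ (C - k) := by
  induction k generalizing R C with
  | zero =>
    refine ⟨1, zero_le_one, fun z _ hz x hx => ?_⟩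
    simp only [Function.iterate_zero, id_eq, Nat.cast_zero, sub_zero, one_mul]
    rw [norm_rpowC (by linarith)]
    exact Real.rpow_le_rpow_of_exponent_le hx (by simpa using neg_le.1 hz)
  | succ k ih =>
    obtain ⟨M, hM0, hM⟩ := ih (R + 1) (C - 1)
    refine ⟨|R| * (M * 2 ^ |C - 1 - k|), by positivity, fun z hz hzC x hx => ?_⟩
    rw [Function.iterate_succ_apply', fwdDiff]
    have hd : ∀ y ∈ Set.Icc x (x + 1), HasDerivWithinAt
        ((fwdDiff 1)^[k] fun y : ℝ => rpowC y (-z))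
        (-z * (fwdDiff 1)^[k] (fun y : ℝ => rpowC y (-(z + 1))) y) (Set.Icc x (x + 1)) y :=
      fun y hy => (hasDerivAt_fwdDiff_rpowC k (by linarith [hy.1]) z).hasDerivWithinAt
    have hb : ∀ y ∈ Set.Icc x (x + 1),
        ‖-z * (fwdDiff 1)^[k] (fun y : ℝ => rpowC y (-(z + 1))) y‖ ≤
          |R| * (M * 2 ^ |C - 1 - k|) * x ^ (C - (k + 1 : ℕ)) := by
      intro y hy
      rw [norm_mul, norm_neg, mul_assoc, mul_assoc]
      have h1 := hM (z + 1) ((norm_add_le _ _).trans (by simpa using hz))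
        (by simp; linarith) y (by linarith [hy.1])
      have h2 : y ^ (C - 1 - k) ≤ 2 ^ |C - 1 - k| * x ^ (C - 1 - k) :=
        rpow_le_two_rpow_mul _ (by linarith) hy.1 (by linarith [hy.2])
      rw [show C - (k + 1 : ℕ) = C - 1 - k by push_cast; ring]
      gcongr
      · exact hz.trans (le_abs_self R)
      · exact h1.trans (by gcongr)
    have := (convex_Icc x (x + 1)).norm_image_sub_le_of_norm_hasDerivWithin_le hd hb
      (Set.left_mem_Icc.2 (by linarith)) (Set.right_mem_Icc.2 (by linarith))
    simpa using this

lemma fwdDiff_iter_natCast (f : ℝ → ℂ) (x : ℝ) (k n : ℕ) :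
    (fwdDiff 1)^[k] (fun n : ℕ => f ((n : ℝ) + x)) n = (fwdDiff 1)^[k] f ((n : ℝ) + x) := by
  induction k generalizing n with
  | zero => rfl
  | succ k ih =>
    rw [Function.iterate_succ_apply', Function.iterate_succ_apply', fwdDiff, fwdDiff, ih, ih]
    push_cast
    rw [add_right_comm]

lemma isSym_rpowC {d : ℕ} (i : Fin d) {α : ℝ} (hα : α ∈ Set.Ico (0 : ℝ) 1) :
    IsSym fun (s : Fin d → ℂ) n => rpowC ((n : ℝ) + (1 + α)) (-(s i)) := by
  refine ⟨fun n => ⟨?_, fun s j => ?_⟩, fun R => ⟨R, fun k => ?_⟩⟩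
  · unfold rpowC; fun_prop
  · unfold rpowC
    rcases eq_or_ne i j with rfl | h
    · simp only [Function.update_self]; fun_prop
    · simp only [Function.update_of_ne h]; fun_prop
  · obtain ⟨M, hM0, hM⟩ := norm_fwdDiff_rpowC_le k R R
    refine ⟨M * 2 ^ |(R : ℝ) - k|, fun s hs n => ?_⟩
    have hs' : ‖s i‖ ≤ R := (norm_le_pi_norm s i).trans (by simpa using (mem_ball_zero_iff.1 hs).le)
    have hn := one_le_cast_add_one n
    dsimp only
    rw [fwdDiff_iter_natCast (fun y => rpowC y (-(s i))), mul_assoc]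
    refine (hM (s i) hs' ?_ _ (by linarith [hα.1])).trans ?_
    · exact (neg_le_neg hs').trans (neg_le_of_abs_le (abs_re_le_norm _))
    · gcongr
      exact rpow_le_two_rpow_mul _ (by linarith) (by linarith [hα.1]) (by linarith [hα.2])

/-! ### Nested sums over decreasing tuples -/

/-- Strictly decreasing `i`-tuples of integers greater than `n`. -/
def Tup (i n : ℕ) : Type := {t : Fin i → ℕ // StrictAnti t ∧ ∀ j, n < t j}

/-- Appending a smallest entry `n + 1 + k`. -/
def Tup.snoc {i n : ℕ} (x : Σ k : ℕ, Tup i (n + 1 + k)) : Tup (i + 1) n :=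
  ⟨Fin.snoc (α := fun _ => ℕ) x.2.1 (n + 1 + x.1), by
    constructor
    · intro a b hab
      induction b using Fin.lastCases with
      | last =>
        obtain ⟨a, rfl⟩ := Fin.exists_castSucc_eq.2 hab.ne
        simpa using x.2.2.2 a
      | cast b =>
        obtain ⟨a, rfl⟩ := Fin.exists_castSucc_eq.2 (hab.trans (Fin.castSucc_lt_last b)).ne
        simpa using x.2.2.1 (by simpa using hab)
    · intro j
      induction j using Fin.lastCases with
      | last => simp; omega
      | cast j =>
        have := x.2.2.2 j
        simp only [Fin.snoc_castSucc]; omega⟩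

lemma Tup.snoc_bijective (i n : ℕ) : Function.Bijective (Tup.snoc (i := i) (n := n)) := by
  constructor
  · rintro ⟨k, u⟩ ⟨k', u'⟩ h
    have h0 : (Fin.snoc (α := fun _ => ℕ) u.1 (n + 1 + k) : Fin (i + 1) → ℕ) =
        Fin.snoc (α := fun _ => ℕ) u'.1 (n + 1 + k') := congrArg Subtype.val h
    obtain ⟨h1, h2⟩ := Fin.snoc_inj.1 h0
    obtain rfl : k = k' := by omega
    obtain rfl : u = u' := Subtype.ext h1
    rfl
  · rintro ⟨t, ht, hn⟩
    obtain ⟨k, hk⟩ := Nat.exists_eq_add_of_le (Nat.succ_le_of_lt (hn (Fin.last i)))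
    have hk' : t (Fin.last i) = n + 1 + k := hk
    refine ⟨⟨k, ⟨Fin.init t, fun a b hab => ht (Fin.castSucc_lt_castSucc_iff.2 hab), fun j => ?_⟩⟩,
      Subtype.ext ?_⟩
    · rw [← hk']; exact ht (Fin.castSucc_lt_last j)
    · change Fin.snoc (α := fun _ => ℕ) (Fin.init t) (n + 1 + k) = t
      rw [← hk']; exact Fin.snoc_init_self t

/-- The decomposition of a decreasing tuple into its smallest entry and the rest. -/
noncomputable def Tup.equiv (i n : ℕ) : (Σ k : ℕ, Tup i (n + 1 + k)) ≃ Tup (i + 1) n :=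
  Equiv.ofBijective _ (Tup.snoc_bijective i n)

/-- The nested sum `∑_{t_0 > ⋯ > t_{i-1} > n} f_0(t_0) ⋯ f_{i-1}(t_{i-1})`. -/
noncomputable def nest (f : ℕ → ℕ → ℂ) (i n : ℕ) : ℂ := ∑' t : Tup i n, ∏ j : Fin i, f j (t.1 j)

lemma prod_snoc {A : Type*} [CommMonoid A] (f : ℕ → ℕ → A) {i n : ℕ}
    (x : Σ k : ℕ, Tup i (n + 1 + k)) :
    ∏ j : Fin (i + 1), f j ((Tup.equiv i n x).1 j) =
      (∏ j : Fin i, f j (x.2.1 j)) * f i (n + 1 + x.1) := by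
  rw [Fin.prod_univ_castSucc]
  change (∏ j : Fin i, f j (Fin.snoc (α := fun _ => ℕ) x.2.1 (n + 1 + x.1) j.castSucc)) *
    f i (Fin.snoc (α := fun _ => ℕ) x.2.1 (n + 1 + x.1) (Fin.last i)) = _
  simp

lemma tup_zero_hasSum (n : ℕ) {A : Type*} [CommSemiring A] [TopologicalSpace A] (f : ℕ → ℕ → A) :
    HasSum (fun t : Tup 0 n => ∏ j : Fin 0, f j (t.1 j)) 1 := by
  have : Unique (Tup 0 n) :=
    { default := ⟨Fin.elim0, fun a => a.elim0, fun a => a.elim0⟩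
      uniq := fun t => Subtype.ext (funext fun a => a.elim0) }
  simpa only [Finset.univ_eq_empty, Finset.prod_empty] using
    hasSum_unique (fun t : Tup 0 n => ∏ j : Fin 0, f j (t.1 j))

/-- Absolute convergence of nested sums, with the decay of the tails in the lower bound `n`. -/
lemma nest_bound {r : ℕ} {f : ℕ → ℕ → ℂ} {σ : ℕ → ℝ}
    (hf : ∀ j < r, ∃ M : ℝ, 0 ≤ M ∧ ∀ m : ℕ, ‖f j (m + 1)‖ ≤ M * ((m : ℝ) + 1) ^ (-σ j))
    (hσ : ∀ i < r, (i : ℝ) + 1 < ∑ j ∈ Finset.range (i + 1), σ j) :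
    ∀ i ≤ r, ∃ C : ℝ, 0 ≤ C ∧ ∀ n : ℕ, Summable (fun t : Tup i n => ∏ j : Fin i, ‖f j (t.1 j)‖) ∧
      ∑' t : Tup i n, ∏ j : Fin i, ‖f j (t.1 j)‖ ≤
        C * ((n : ℝ) + 1) ^ ((i : ℝ) - ∑ j ∈ Finset.range i, σ j) := by
  intro i
  induction i with
  | zero =>
    intro _
    refine ⟨1, zero_le_one, fun n => ?_⟩
    have h := tup_zero_hasSum n (fun j m => ‖f j m‖)
    exact ⟨h.summable, by rw [h.tsum_eq]; simp⟩
  | succ i ih =>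
    intro hi
    obtain ⟨C, hC0, hC⟩ := ih (by omega)
    obtain ⟨M, hM0, hM⟩ := hf i (by omega)
    set p : ℝ := (i : ℝ) - ∑ j ∈ Finset.range i, σ j with hp
    have hτ : 1 < σ i - p := by
      have := hσ i (by omega)
      rw [Finset.sum_range_succ] at this
      linarith
    obtain ⟨B, hB0, hB⟩ := tail_rpow hτ
    refine ⟨C * 2 ^ |p| * M * B, by positivity, fun n => ?_⟩
    let F : (Σ k : ℕ, Tup i (n + 1 + k)) → ℝ := fun x =>
      (∏ j : Fin i, ‖f j (x.2.1 j)‖) * ‖f i (n + 1 + x.1)‖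
    have hF : (fun t : Tup (i + 1) n => ∏ j : Fin (i + 1), ‖f j (t.1 j)‖) ∘ Tup.equiv i n = F := by
      ext x; exact prod_snoc (fun j m => ‖f j m‖) x
    have hF0 : ∀ x, 0 ≤ F x := fun x => by positivity
    have hin : ∀ k : ℕ, Summable fun u : Tup i (n + 1 + k) => F ⟨k, u⟩ := fun k => by
      have h := (hC (n + 1 + k)).1.mul_right ‖f i (n + 1 + k)‖
      exact h
    have hle : ∀ k : ℕ, ∑' u : Tup i (n + 1 + k), F ⟨k, u⟩ ≤
        C * 2 ^ |p| * M * ((n : ℝ) + k + 1) ^ (-(σ i - p)) := by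
      intro k
      have hpos : (1 : ℝ) ≤ (n : ℝ) + k + 1 := by
        have : (0 : ℝ) ≤ n + k := by positivity
        linarith
      simp only [F]
      rw [tsum_mul_right]
      have h1 := (hC (n + 1 + k)).2
      have h2 := hM (n + k)
      rw [show n + k + 1 = n + 1 + k by omega] at h2
      push_cast at h1 h2
      have h3 : ((n : ℝ) + 1 + k + 1) ^ p ≤ 2 ^ |p| * ((n : ℝ) + k + 1) ^ p :=
        rpow_le_two_rpow_mul _ (by linarith) (by linarith) (by linarith)
      have h4 : ((n : ℝ) + k + 1) ^ (-(σ i - p)) =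
          ((n : ℝ) + k + 1) ^ p * ((n : ℝ) + k + 1) ^ (-σ i) := by
        rw [← Real.rpow_add (by linarith)]; congr 1; ring
      calc _ ≤ (C * (2 ^ |p| * ((n : ℝ) + k + 1) ^ p)) * (M * ((n : ℝ) + k + 1) ^ (-σ i)) := by
            gcongr
            exact h1.trans (by gcongr)
        _ = _ := by rw [h4]; ring
    have hs1 : Summable fun k : ℕ => ∑' u : Tup i (n + 1 + k), F ⟨k, u⟩ :=
      Summable.of_nonneg_of_le (fun k => tsum_nonneg fun u => hF0 _) hle (((hB n).1).mul_left _)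
    have hs : Summable F := (summable_sigma_of_nonneg hF0).2 ⟨hin, hs1⟩
    refine ⟨(Equiv.summable_iff (Tup.equiv i n)).1 (by rwa [hF]), ?_⟩
    rw [← (Tup.equiv i n).tsum_eq]
    have h5 : ∑' x, ∏ j : Fin (i + 1), ‖f j ((Tup.equiv i n x).1 j)‖ = ∑' x, F x :=
      tsum_congr fun x => congrFun hF x
    rw [h5, hs.tsum_sigma' hin]
    refine (hs1.tsum_le_tsum hle (((hB n).1).mul_left _)).trans ?_
    rw [tsum_mul_left, mul_assoc _ B]
    gcongr
    refine ((hB n).2).trans (le_of_eq ?_)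
    rw [Finset.sum_range_succ]
    congr 2
    push_cast
    linarith

/-- Summation over the smallest entry comes last. -/
lemma nest_succ {f : ℕ → ℕ → ℂ} {i n : ℕ}
    (h : Summable fun t : Tup (i + 1) n => ∏ j : Fin (i + 1), ‖f j (t.1 j)‖)
    (h' : ∀ n, Summable fun t : Tup i n => ∏ j : Fin i, ‖f j (t.1 j)‖) :
    HasSum (fun k : ℕ => f i (n + 1 + k) * nest f i (n + 1 + k)) (nest f (i + 1) n) := by
  have hs : Summable fun t : Tup (i + 1) n => ∏ j : Fin (i + 1), f j (t.1 j) := by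
    refine Summable.of_norm ?_
    simpa only [norm_prod] using h
  have hs' : ∀ n, Summable fun t : Tup i n => ∏ j : Fin i, f j (t.1 j) := fun n => by
    refine Summable.of_norm ?_
    simpa only [norm_prod] using h' n
  have h1 := (Equiv.hasSum_iff (Tup.equiv i n)).2 hs.hasSum
  refine HasSum.sigma h1 fun k => ?_
  have h2 := ((hs' (n + 1 + k)).hasSum).mul_left (f i (n + 1 + k))
  refine h2.congr_fun fun u => ?_
  exact (prod_snoc f ⟨k, u⟩).trans (mul_comm _ _)

/-! ### The Lerch series as iterated tail sums -/

lemma eR_add (x y : ℝ) : eR (x + y) = eR x * eR y := by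
  rw [eR, eR, eR, ← exp_add]; congr 1; push_cast; ring

lemma eR_zero : eR 0 = 1 := by simp [eR]

lemma eR_mul_nat (x : ℝ) (k : ℕ) : eR (x * k) = eR x ^ k := by
  rw [eR, eR, ← exp_nat_mul]; congr 1; push_cast; ring

lemma norm_eR (x : ℝ) : ‖eR x‖ = 1 := by
  rw [eR, show 2 * (Real.pi : ℂ) * I * x = ((2 * Real.pi * x : ℝ) : ℂ) * I by push_cast; ring]
  exact norm_exp_ofReal_mul_I _

lemma exists_int_of_eR_eq_one {x : ℝ} (h : eR x = 1) : ∃ z : ℤ, x = z := by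
  obtain ⟨n, hn⟩ := exp_eq_one_iff.1 h
  refine ⟨n, ?_⟩
  have h1 : (2 * (Real.pi : ℂ) * I) * x = (2 * (Real.pi : ℂ) * I) * n := by rw [hn]; ring
  have h2 := mul_left_cancel₀ two_pi_I_ne_zero h1
  exact_mod_cast h2

lemma isSym_one {d : ℕ} : IsSym fun (_ : Fin d → ℂ) (_ : ℕ) => (1 : ℂ) := by
  refine ⟨fun _ => sepHolo_const 1, fun R => ⟨0, fun k => ⟨1, fun s _ n => ?_⟩⟩⟩
  cases k with
  | zero => simp
  | succ k =>
    have : (fwdDiff 1)^[k] (fun _ : ℕ => (0 : ℂ)) = fun _ => 0 := by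
      induction k with
      | zero => rfl
      | succ k ih => rw [Function.iterate_succ_apply, fwdDiff_const, ih]
    rw [Function.iterate_succ_apply, fwdDiff_const, this, norm_zero]
    positivity

/-- The `j`-th factor of the terms of the multiple Lerch zeta function, as a function of `n_j`.
The index `j` is reduced modulo `r + 1`. -/
noncomputable def lerchFactor {r : ℕ} (lam al : Fin (r + 1) → ℝ) (s : Fin (r + 1) → ℂ)
    (j m : ℕ) : ℂ :=
  eR (lam (Fin.ofNat (r + 1) j) * m) *
    rpowC ((m : ℝ) + al (Fin.ofNat (r + 1) j)) (-(s (Fin.ofNat (r + 1) j)))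

lemma norm_lerchFactor_le {r : ℕ} {lam al : Fin (r + 1) → ℝ}
    (hal : ∀ i, al i ∈ Set.Ico (0 : ℝ) 1) (s : Fin (r + 1) → ℂ) (j : ℕ) :
    ∃ M : ℝ, 0 ≤ M ∧ ∀ m : ℕ, ‖lerchFactor lam al s j (m + 1)‖ ≤
      M * ((m : ℝ) + 1) ^ (-(s (Fin.ofNat (r + 1) j)).re) := by
  refine ⟨2 ^ |-(s (Fin.ofNat (r + 1) j)).re|, by positivity, fun m => ?_⟩
  have hα := hal (Fin.ofNat (r + 1) j)
  have hm := one_le_cast_add_one m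
  rw [lerchFactor, norm_mul, norm_eR, one_mul]
  push_cast
  rw [norm_rpowC (by linarith [hα.1]), neg_re]
  exact rpow_le_two_rpow_mul _ (by linarith) (by linarith [hα.1]) (by linarith [hα.2])

lemma sum_Iic_eq_sum_range {A : Type*} [AddCommMonoid A] {r : ℕ} (g : Fin (r + 1) → A)
    (i : Fin (r + 1)) :
    ∑ j ∈ Finset.Iic i, g j = ∑ j ∈ Finset.range ((i : ℕ) + 1), g (Fin.ofNat (r + 1) j) := by
  symm
  refine Finset.sum_bij' (fun j _ => Fin.ofNat (r + 1) j) (fun j _ => (j : ℕ)) ?_ ?_ ?_ ?_ ?_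
  · intro j hj
    have h1 := Finset.mem_range.1 hj
    have h2 : j % (r + 1) = j := Nat.mod_eq_of_lt (by omega)
    rw [Finset.mem_Iic, Fin.le_def, Fin.val_ofNat, h2]
    omega
  · intro j hj
    have := Fin.le_def.1 (Finset.mem_Iic.1 hj)
    exact Finset.mem_range.2 (by omega)
  · intro j hj
    have h1 := Finset.mem_range.1 hj
    exact Nat.mod_eq_of_lt (by omega)
  · intro j _
    exact Fin.ext (Nat.mod_eq_of_lt j.2)
  · intro j _; rfl

/-- The nested sums over the first `i` variables are, up to a twist, restrictions of symbols. -/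
lemma exists_sym {r : ℕ} {lam al : Fin (r + 1) → ℝ} (hal : ∀ i, al i ∈ Set.Ico (0 : ℝ) 1)
    (hmu : ∀ i : Fin (r + 1), ¬ isIntIdx lam i) :
    ∀ i ≤ r + 1, ∃ b : (Fin (r + 1) → ℂ) → ℕ → ℂ, IsSym b ∧
      ∀ s ∈ Ur (r + 1) 0, ∀ n : ℕ, nest (lerchFactor lam al s) i n =
        eR ((∑ j ∈ Finset.range i, lam (Fin.ofNat (r + 1) j)) * n) * b s n := by
  intro i
  induction i with
  | zero =>
    intro _
    refine ⟨_, isSym_one, fun s _ n => ?_⟩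
    rw [Finset.sum_range_zero, zero_mul, eR_zero, one_mul]
    exact (tup_zero_hasSum n (lerchFactor lam al s)).tsum_eq
  | succ i ih =>
    intro hi
    obtain ⟨b, hb, hbs⟩ := ih (by omega)
    set c := Fin.ofNat (r + 1) i with hc
    set μ := ∑ j ∈ Finset.range i, lam (Fin.ofNat (r + 1) j) with hμ
    have hw1 : eR (μ + lam c) ≠ 1 := by
      intro h
      obtain ⟨z, hz⟩ := exists_int_of_eR_eq_one h
      refine hmu ⟨i, by omega⟩ ⟨z, ?_⟩
      rw [sum_Iic_eq_sum_range, Finset.sum_range_succ, ← hz]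
    have ha : IsSym fun (s : Fin (r + 1) → ℂ) m =>
        rpowC ((m : ℝ) + (1 + al c)) (-(s c)) * b s (m + 1) :=
      (isSym_rpowC c (hal c)).mul hb.shift
    obtain ⟨b', hb', hbs'⟩ := ha.exists_tail (norm_eR (μ + lam c)) hw1
    refine ⟨fun s n => eR (μ + lam c) * b' s n, hb'.const_mul _, fun s hs n => ?_⟩
    have hσ : ∀ i < r + 1, (i : ℝ) + 1 <
        ∑ j ∈ Finset.range (i + 1), (s (Fin.ofNat (r + 1) j)).re := by
      intro i hi
      have := hs ⟨i, hi⟩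
      rw [sum_Iic_eq_sum_range, re_sum] at this
      simpa using this
    have hbound := nest_bound (fun j _ => norm_lerchFactor_le (lam := lam) hal s j) hσ
    obtain ⟨_, -, h1⟩ := hbound (i + 1) hi
    obtain ⟨_, -, h2⟩ := hbound i (by omega)
    have hsum := fun n => nest_succ (h1 n).1 fun n => (h2 n).1
    -- The twist of the new variable combines with the accumulated one.
    have hterm : ∀ m : ℕ, lerchFactor lam al s i (m + 1) * nest (lerchFactor lam al s) i (m + 1) =
        eR ((μ + lam c) * (m + 1 : ℕ)) *
          (rpowC ((m : ℝ) + (1 + al c)) (-(s c)) * b s (m + 1)) := by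
      intro m
      rw [hbs s hs, add_mul, eR_add, lerchFactor, ← hc]
      push_cast
      rw [← add_assoc (m : ℝ)]
      ring
    have hsa : Summable fun m : ℕ => rpowC ((m : ℝ) + (1 + al c)) (-(s c)) * b s (m + 1) := by
      refine Summable.of_norm ?_
      have h3 := (hsum 0).summable.norm
      refine h3.congr fun m => ?_
      rw [show 0 + 1 + m = m + 1 by omega, hterm, norm_mul, norm_eR, one_mul]
    change _ = _ * (eR (μ + lam c) * b' s n)
    rw [hbs' s hsa, ← (hsum n).tsum_eq, tailSum, Finset.sum_range_succ, ← hc, ← hμ,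
      ← tsum_mul_left, ← tsum_mul_left]
    refine tsum_congr fun k => ?_
    rw [show n + 1 + k = n + k + 1 by omega, hterm, eR_mul_nat, eR_mul_nat]
    ring

/-! ### The entire continuation -/

/-- If `μ_i ∉ ℤ` for all `1 ≤ i ≤ r`, then the multiple Lerch zeta function
extends to an entire function on `ℂ^r`. -/
theorem stmt_8 (r : ℕ) (lam al : Fin (r + 1) → ℝ)
    (hlam : ∀ i, lam i ∈ Set.Ico (0 : ℝ) 1) (hal : ∀ i, al i ∈ Set.Ico (0 : ℝ) 1)
    (hmu : ∀ i : Fin (r + 1), ¬ isIntIdx lam i) :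
    ∃ F : (Fin (r + 1) → ℂ) → ℂ, AnalyticOnNhd ℂ F Set.univ ∧
      ∀ s ∈ Ur (r + 1) 0, F s = multipleLerch lam al s := by
  obtain ⟨b, hb, hbs⟩ := exists_sym hal hmu (r + 1) le_rfl
  refine ⟨fun s => b s 0, (hb.1 0).analyticOnNhd, fun s hs => ?_⟩
  have h := hbs s hs 0
  rw [Nat.cast_zero, mul_zero, eR_zero, one_mul] at h
  change b s 0 = _
  rw [← h]
  refine tsum_congr fun t : DTuple (r + 1) => ?_
  rw [lerchTerm, ← Finset.prod_div_distrib]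
  refine Finset.prod_congr rfl fun j _ => ?_
  have hj : Fin.ofNat (r + 1) (j : ℕ) = j := Fin.ext (Nat.mod_eq_of_lt j.2)
  rw [lerchFactor, hj, div_eq_mul_inv]
  simp only [rpowC, neg_mul, exp_neg]
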